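/- (Beals-type converse.) Let a : ℝ^{2n} → ℂ be a smooth function all of whose partial derivatives ∂^α a (α ∈ ℕ^{2n}) are polynomially bounded. Suppose that for every multi-index α ∈ ℕ^{2n} there exists a constant C_α > 0 such that for all Schwartz functions u, v ∈ S(ℝⁿ, ℂ), |∫_{ℝ^{2n}} (∂^α a)(x,ξ) · W(u,v)(x,ξ) dx dξ| ≤ C_α · ‖u‖_{L²(ℝⁿ)} · ‖v‖_{L²(ℝⁿ)}. Then every partial derivative ∂^α a is bounded on ℝ^{2n}. -/

import Mathlib

open MeasureTheory

noncomputable section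

/-- Euclidean scalar product on `ℝⁿ`. -/
def dotn {n : ℕ} (p q : Fin n → ℝ) : ℝ := ∑ i, p i * q i

/-- The standard basis vector of `ℝ^{2n} = ℝⁿ × ℝⁿ` indexed by `i : Fin n ⊕ Fin n`. -/
def stdVec {n : ℕ} (i : Fin n ⊕ Fin n) : (Fin n → ℝ) × (Fin n → ℝ) :=
  Sum.elim (fun j => (Pi.single j 1, 0)) (fun j => (0, Pi.single j 1)) i

/-- The partial derivative of `f : ℝ^{2n} → ℂ` in the `i`-th coordinate direction. -/
def pDeriv {n : ℕ} (i : Fin n ⊕ Fin n)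
    (f : (Fin n → ℝ) × (Fin n → ℝ) → ℂ) : (Fin n → ℝ) × (Fin n → ℝ) → ℂ :=
  fun z => fderiv ℝ f z (stdVec i)

/-- The iterated partial derivative `∂^α f` given by a list of coordinate
directions (`L = []` gives `f` itself). -/
def pDerivList {n : ℕ} (L : List (Fin n ⊕ Fin n))
    (f : (Fin n → ℝ) × (Fin n → ℝ) → ℂ) : (Fin n → ℝ) × (Fin n → ℝ) → ℂ :=
  L.foldr (fun i g => pDeriv i g) f

/-- The Wigner transform
`W(u,v)(x,ξ) = (2π)^{−n} ∫ u(x+y/2) conj(v(x−y/2)) e^{−i(y|ξ)} dy`. -/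
def wigner {n : ℕ} (u v : SchwartzMap (Fin n → ℝ) ℂ)
    (z : (Fin n → ℝ) × (Fin n → ℝ)) : ℂ :=
  ((((2 * Real.pi) ^ n)⁻¹ : ℝ) : ℂ) *
    ∫ y : Fin n → ℝ,
      u (z.1 + (2⁻¹ : ℝ) • y) * (starRingEnd ℂ) (v (z.1 - (2⁻¹ : ℝ) • y)) *
        Complex.exp (-Complex.I * ((dotn y z.2 : ℝ) : ℂ))

open Function
open Complex (I)
open scoped Complex ContDiff FourierTransform LineDeriv Real RealInnerProductSpace SchwartzMap

/-!
The cross-Wigner transform of two phase-space shifts of a Gaussian is a translated and modulated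
Gaussian on phase space, so testing `L²`-boundedness of `Op(∂^α a)` on such pairs bounds the
short-time Fourier transform of `∂^α a` with a Gaussian window. Dividing by the Gaussian passes to a
compactly supported window, because multiplying the window by a Schwartz function convolves on the
Fourier side and preserves boundedness. Leibniz' rule trades powers of the frequency for derivatives
of the symbol and of the window, so the localized symbols have rapidly decreasing Fourier
transforms, uniformly in their position, and Fourier inversion bounds the symbol pointwise.
-/

section TemperateGrowth

variable {ι E F : Type*} [Fintype ι] [NormedAddCommGroup E] [InnerProductSpace ℝ E]
  [NormedAddCommGroup F] [NormedSpace ℝ F]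

lemma fderiv_eq_sum_smulRight (b : OrthonormalBasis ι ℝ E) (f : E → F) :
    fderiv ℝ f = fun x => ∑ i,
      (ContinuousLinearMap.smulRightL ℝ E F (innerSL ℝ (b i)) ∘ fun y => fderiv ℝ f y (b i)) x := by
  ext x v
  conv_lhs => rw [← b.sum_repr' v]
  simp

lemma norm_iteratedFDeriv_succ_le_sum (b : OrthonormalBasis ι ℝ E) {f : E → F}
    (hf : ContDiff ℝ ∞ f) (k : ℕ) (x : E) :
    ‖iteratedFDeriv ℝ (k + 1) f x‖ ≤
      ∑ i, ‖iteratedFDeriv ℝ k (fun y => fderiv ℝ f y (b i)) x‖ := by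
  have hd (i : ι) : ContDiff ℝ k fun y => fderiv ℝ f y (b i) :=
    (hf.fderiv_right (m := k) (mod_cast le_top)).clm_apply contDiff_const
  have hL (i : ι) : ‖ContinuousLinearMap.smulRightL ℝ E F (innerSL ℝ (b i))‖ ≤ 1 :=
    ContinuousLinearMap.opNorm_le_bound _ zero_le_one fun c => by simp
  rw [← norm_iteratedFDeriv_fderiv, congrArg (iteratedFDeriv ℝ k) (fderiv_eq_sum_smulRight b f),
    iteratedFDeriv_fun_sum_apply fun i _ =>
      ((ContinuousLinearMap.smulRightL ℝ E F (innerSL ℝ (b i))).contDiff.comp (hd i)).contDiffAt]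
  refine (norm_sum_le _ _).trans (Finset.sum_le_sum fun i _ => ?_)
  calc _ ≤ ‖ContinuousLinearMap.smulRightL ℝ E F (innerSL ℝ (b i))‖ * _ :=
        ContinuousLinearMap.norm_iteratedFDeriv_comp_left _ (hd i).contDiffAt le_rfl
    _ ≤ _ := mul_le_of_le_one_left (norm_nonneg _) (hL i)

lemma hasTemperateGrowth_of_forall_partial (b : OrthonormalBasis ι ℝ E) {𝒜 : Set (E → F)}
    (hsmooth : ∀ f ∈ 𝒜, ContDiff ℝ ∞ f)
    (hpartial : ∀ f ∈ 𝒜, ∀ i, (fun x => fderiv ℝ f x (b i)) ∈ 𝒜)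
    (hbound : ∀ f ∈ 𝒜, ∃ (k : ℕ) (C : ℝ), ∀ x, ‖f x‖ ≤ C * (1 + ‖x‖) ^ k) :
    ∀ f ∈ 𝒜, f.HasTemperateGrowth := by
  suffices h : ∀ n : ℕ, ∀ f ∈ 𝒜, ∃ (k : ℕ) (C : ℝ), ∀ x,
      ‖iteratedFDeriv ℝ n f x‖ ≤ C * (1 + ‖x‖) ^ k from
    fun f hf => ⟨hsmooth f hf, fun n => h n f hf⟩
  intro n
  induction n with
  | zero => simpa only [norm_iteratedFDeriv_zero] using hbound
  | succ n ih =>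
    intro f hf
    choose k C hC using fun i => ih _ (hpartial f hf i)
    refine ⟨∑ i, k i, ∑ i, |C i|, fun x => ?_⟩
    calc ‖iteratedFDeriv ℝ (n + 1) f x‖
        ≤ ∑ i, ‖iteratedFDeriv ℝ n (fun y => fderiv ℝ f y (b i)) x‖ :=
          norm_iteratedFDeriv_succ_le_sum b (hsmooth f hf) n x
      _ ≤ ∑ i, |C i| * (1 + ‖x‖) ^ ∑ i, k i := by
          gcongr with i
          have h1 : (1 + ‖x‖) ^ k i ≤ (1 + ‖x‖) ^ ∑ i, k i :=
            pow_le_pow_right₀ (by linarith [norm_nonneg x])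
              (Finset.single_le_sum (fun _ _ => Nat.zero_le _) (Finset.mem_univ i))
          exact (hC i x).trans (mul_le_mul (le_abs_self _) h1 (by positivity) (abs_nonneg _))
      _ = _ := (Finset.sum_mul ..).symm

end TemperateGrowth

section Localization

variable {E : Type*} [NormedAddCommGroup E] [NormedSpace ℝ E]

/-- The localization `x ↦ f (x + z) * φ x` of `f` near `z`. Its Fourier transform at `w` is, up to a
phase, the short-time Fourier transform of `f` at `(z, w)` with window `φ`; translating `f` rather
than `φ` keeps the window fixed. If `f` is not of temperate growth, `smulLeftCLM` returns `0`. -/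
def localize (φ : 𝓢(E, ℂ)) (f : E → ℂ) (z : E) : 𝓢(E, ℂ) :=
  SchwartzMap.smulLeftCLM ℂ (fun x => f (x + z)) φ

lemma hasTemperateGrowth_fderiv_apply {F : Type*} [NormedAddCommGroup F] [NormedSpace ℝ F]
    {f : E → F} (hf : f.HasTemperateGrowth) (v : E) :
    (fun x => fderiv ℝ f x v).HasTemperateGrowth := by
  have hf' : (fderiv ℝ f).HasTemperateGrowth :=
    ⟨hf.1.fderiv_right le_rfl, fun n => by
      simpa only [norm_iteratedFDeriv_fderiv] using hf.2 (n + 1)⟩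
  exact (ContinuousLinearMap.apply ℝ F v).hasTemperateGrowth.comp hf'

lemma localize_apply (φ : 𝓢(E, ℂ)) {f : E → ℂ} (hf : f.HasTemperateGrowth) (z x : E) :
    localize φ f z x = f (x + z) * φ x :=
  SchwartzMap.smulLeftCLM_apply_apply (by fun_prop) φ x

lemma lineDerivOp_localize (φ : 𝓢(E, ℂ)) {f : E → ℂ} (hf : f.HasTemperateGrowth) (z v : E) :
    ∂_{v} (localize φ f z) = localize φ (fun x => fderiv ℝ f x v) z + localize (∂_{v} φ) f z := by
  ext x
  have hfx : HasFDerivAt (fun x => f (x + z)) (fderiv ℝ f (x + z)) x :=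
    (hasFDerivAt_comp_add_right z).2 (hf.1.differentiable (by simp) _).hasFDerivAt
  have hφx : HasFDerivAt φ (fderiv ℝ φ x) x := (φ.differentiable x).hasFDerivAt
  rw [add_apply, localize_apply _ (hasTemperateGrowth_fderiv_apply hf v),
    localize_apply _ hf, SchwartzMap.lineDerivOp_apply_eq_fderiv,
    SchwartzMap.lineDerivOp_apply_eq_fderiv, funext (localize_apply φ hf z),
    (hfx.fun_mul hφx).fderiv]
  simp [mul_comm, add_comm]

lemma localize_smulLeftCLM (φ h : 𝓢(E, ℂ)) {f : E → ℂ} (hf : f.HasTemperateGrowth) (z : E) :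
    localize (SchwartzMap.smulLeftCLM ℂ h φ) f z =
      SchwartzMap.smulLeftCLM ℂ h (localize φ f z) := by
  ext x
  rw [localize_apply _ hf, SchwartzMap.smulLeftCLM_apply_apply h.hasTemperateGrowth,
    SchwartzMap.smulLeftCLM_apply_apply h.hasTemperateGrowth, localize_apply _ hf,
    smul_eq_mul, smul_eq_mul, mul_left_comm]

end Localization

section STFT

variable {E : Type*} [NormedAddCommGroup E] [InnerProductSpace ℝ E] [FiniteDimensional ℝ E]

lemma exists_schwartzMap_hasCompactSupport_apply_zero_eq_one :
    ∃ φ : 𝓢(E, ℂ), HasCompactSupport φ ∧ φ 0 = 1 := by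
  let bump : ContDiffBump (0 : E) := ⟨1, 2, one_pos, one_lt_two⟩
  have hsupp : HasCompactSupport fun x => (bump x : ℂ) :=
    bump.hasCompactSupport.comp_left Complex.ofReal_zero
  refine ⟨hsupp.toSchwartzMap (Complex.ofRealCLM.contDiff.comp bump.contDiff), hsupp, ?_⟩
  have h0 : bump 0 = 1 := bump.one_of_mem_closedBall (Metric.mem_closedBall_self bump.rIn_pos.le)
  exact (congrArg Complex.ofReal h0).trans Complex.ofReal_one

variable [MeasurableSpace E] [BorelSpace E]

lemma norm_fourier_smulLeftCLM_le {S : 𝓢(E, ℂ)} {C : ℝ} (hS : ∀ w, ‖𝓕 S w‖ ≤ C)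
    (h : 𝓢(E, ℂ)) (w : E) :
    ‖𝓕 (SchwartzMap.smulLeftCLM ℂ h S) w‖ ≤ C * ∫ x, ‖𝓕⁻ h x‖ := by
  have hconv : SchwartzMap.smulLeftCLM ℂ h S =
      𝓕 (SchwartzMap.convolution (.mul ℂ ℂ) (𝓕⁻ S) (𝓕⁻ h)) := by
    ext x
    simp [SchwartzMap.fourier_convolution,
      SchwartzMap.smulLeftCLM_apply_apply h.hasTemperateGrowth, mul_comm]
  have hfourier (T : 𝓢(E, ℂ)) (x : E) : 𝓕 T x = 𝓕⁻ T (-x) := by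
    simp [SchwartzMap.fourierInv_coe, SchwartzMap.fourier_coe, Real.fourierInv_eq_fourier_neg]
  rw [hfourier, hconv, FourierTransform.fourierInv_fourier_eq, SchwartzMap.convolution_apply,
    convolution_mul_swap, ← integral_const_mul]
  refine norm_integral_le_of_norm_le ((𝓕⁻ h).integrable.norm.const_mul C) (.of_forall fun x => ?_)
  rw [norm_mul, ← neg_neg (-w - x), ← hfourier]
  gcongr
  exact hS _

lemma norm_mul_norm_fourier_le_sum {ι : Type*} [Fintype ι] (b : OrthonormalBasis ι ℝ E)
    (S : 𝓢(E, ℂ)) (w : E) : ‖w‖ * ‖𝓕 S w‖ ≤ ∑ i, ‖𝓕 (∂_{b i} S) w‖ := by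
  have hw : ‖w‖ ≤ ∑ i, ‖⟪w, b i⟫‖ := by
    conv_lhs => rw [← b.sum_repr' w]
    refine (norm_sum_le _ _).trans_eq (Finset.sum_congr rfl fun i _ => ?_)
    rw [norm_smul, b.norm_eq_one, mul_one, real_inner_comm]
  calc ‖w‖ * ‖𝓕 S w‖ ≤ ∑ i, ‖⟪w, b i⟫‖ * ‖𝓕 S w‖ := by
        rw [← Finset.sum_mul]; gcongr
    _ ≤ ∑ i, ‖𝓕 (∂_{b i} S) w‖ := by
        gcongr with i
        rw [SchwartzMap.fourier_lineDerivOp_eq, smul_apply,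
          SchwartzMap.smulLeftCLM_apply_apply (by fun_prop), norm_smul, norm_smul]
        refine le_mul_of_one_le_left (by positivity) ?_
        simpa [abs_of_pos Real.pi_pos] using by linarith [Real.pi_gt_three]

lemma norm_apply_le_of_fourier_decay {S : 𝓢(E, ℂ)} {C₀ C₁ : ℝ} (h₀ : ∀ w, ‖𝓕 S w‖ ≤ C₀)
    (h₁ : ∀ w, ‖w‖ ^ (volume : Measure E).integrablePower * ‖𝓕 S w‖ ≤ C₁) (x : E) :
    ‖S x‖ ≤ 2 ^ (volume : Measure E).integrablePower *
      (∫ w : E, (1 + ‖w‖) ^ (-((volume : Measure E).integrablePower : ℝ))) * (C₀ + C₁) := by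
  calc ‖S x‖ = ‖∫ w, 𝐞 ⟪w, x⟫ • 𝓕 S w‖ := by
        rw [← Real.fourierInv_eq, ← SchwartzMap.fourierInv_coe,
          FourierTransform.fourierInv_fourier_eq]
    _ ≤ ∫ w, ‖𝓕 S w‖ := by
        simpa using norm_integral_le_integral_norm (μ := volume) fun w => 𝐞 ⟪w, x⟫ • 𝓕 S w
    _ ≤ _ := by
        simpa using integral_pow_mul_le_of_le_of_pow_mul_le (k := 0) h₀ (by simpa using h₁)

/-- Boundedness of the short-time Fourier transform of `f` with window `φ`, expressed through
`localize`; meaningful only for `f` of temperate growth. -/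
def HasBoundedSTFT (φ : 𝓢(E, ℂ)) (f : E → ℂ) : Prop :=
  ∃ C : ℝ, ∀ z w, ‖𝓕 (localize φ f z) w‖ ≤ C

lemma HasBoundedSTFT.smulLeftCLM {φ : 𝓢(E, ℂ)} {f : E → ℂ} (h : HasBoundedSTFT φ f)
    (hf : f.HasTemperateGrowth) (χ : 𝓢(E, ℂ)) :
    HasBoundedSTFT (SchwartzMap.smulLeftCLM ℂ χ φ) f := by
  obtain ⟨C, hC⟩ := h
  refine ⟨C * ∫ x, ‖𝓕⁻ χ x‖, fun z w => ?_⟩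
  rw [localize_smulLeftCLM _ _ hf]
  exact norm_fourier_smulLeftCLM_le (hC z) χ w

lemma HasBoundedSTFT.of_hasCompactSupport {g φ : 𝓢(E, ℂ)} {f : E → ℂ} (h : HasBoundedSTFT g f)
    (hf : f.HasTemperateGrowth) (hg : ∀ x, g x ≠ 0) (hφ : HasCompactSupport φ) :
    HasBoundedSTFT φ f := by
  have hquot : ContDiff ℝ ∞ fun x => φ x * (g x)⁻¹ := (φ.smooth ⊤).mul ((g.smooth ⊤).inv hg)
  have hsupp : HasCompactSupport fun x => φ x * (g x)⁻¹ := hφ.mul_right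
  convert! h.smulLeftCLM hf (hsupp.toSchwartzMap hquot)
  ext x
  rw [SchwartzMap.smulLeftCLM_apply_apply (SchwartzMap.hasTemperateGrowth _)]
  exact (inv_mul_cancel_right₀ (hg x) (φ x)).symm

variable {ι : Type*} [Fintype ι]

lemma exists_norm_pow_mul_fourier_localize_le (b : OrthonormalBasis ι ℝ E) {𝒜 : Set (E → ℂ)}
    (htemp : ∀ f ∈ 𝒜, f.HasTemperateGrowth)
    (hpartial : ∀ f ∈ 𝒜, ∀ i, (fun x => fderiv ℝ f x (b i)) ∈ 𝒜)
    (hSTFT : ∀ f ∈ 𝒜, ∀ φ : 𝓢(E, ℂ), HasCompactSupport φ → HasBoundedSTFT φ f) (k : ℕ) :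
    ∀ f ∈ 𝒜, ∀ φ : 𝓢(E, ℂ), HasCompactSupport φ →
      ∃ C : ℝ, ∀ z w, ‖w‖ ^ k * ‖𝓕 (localize φ f z) w‖ ≤ C := by
  induction k with
  | zero => simpa [HasBoundedSTFT] using hSTFT
  | succ k ih =>
    intro f hf φ hφ
    have hφ' (i : ι) : HasCompactSupport (∂_{b i} φ : 𝓢(E, ℂ)) :=
      hφ.of_isClosed_subset (isClosed_tsupport _) (SchwartzMap.tsupport_lineDerivOp_subset _ φ)
    choose C hC using fun i => ih _ (hpartial f hf i) φ hφ
    choose D hD using fun i => ih f hf (∂_{b i} φ) (hφ' i)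
    refine ⟨∑ i, (C i + D i), fun z w => ?_⟩
    calc ‖w‖ ^ (k + 1) * ‖𝓕 (localize φ f z) w‖
        = ‖w‖ ^ k * (‖w‖ * ‖𝓕 (localize φ f z) w‖) := by ring
      _ ≤ ‖w‖ ^ k * ∑ i, ‖𝓕 (∂_{b i} (localize φ f z)) w‖ := by
          gcongr; exact norm_mul_norm_fourier_le_sum b _ w
      _ ≤ ∑ i, (C i + D i) := by
          rw [Finset.mul_sum]
          gcongr with i
          rw [lineDerivOp_localize φ (htemp f hf), FourierTransform.fourier_add, add_apply]
          exact (mul_le_mul_of_nonneg_left (norm_add_le _ _) (by positivity)).trans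
            ((mul_add _ _ _).trans_le (add_le_add (hC i z w) (hD i z w)))

theorem exists_norm_le_of_hasBoundedSTFT (b : OrthonormalBasis ι ℝ E) {𝒜 : Set (E → ℂ)}
    (htemp : ∀ f ∈ 𝒜, f.HasTemperateGrowth)
    (hpartial : ∀ f ∈ 𝒜, ∀ i, (fun x => fderiv ℝ f x (b i)) ∈ 𝒜)
    {g : 𝓢(E, ℂ)} (hg : ∀ x, g x ≠ 0) (hSTFT : ∀ f ∈ 𝒜, HasBoundedSTFT g f) :
    ∀ f ∈ 𝒜, ∃ M : ℝ, ∀ z, ‖f z‖ ≤ M := by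
  intro f hf
  obtain ⟨φ, hsupp, hφ⟩ := exists_schwartzMap_hasCompactSupport_apply_zero_eq_one (E := E)
  have hdecay (k : ℕ) := exists_norm_pow_mul_fourier_localize_le b htemp hpartial
    (fun f hf φ hφ => (hSTFT f hf).of_hasCompactSupport (htemp f hf) hg hφ) k f hf φ hsupp
  obtain ⟨C₀, h₀⟩ := hdecay 0
  obtain ⟨C₁, h₁⟩ := hdecay (volume : Measure E).integrablePower
  have hz (z : E) : localize φ f z 0 = f z := by
    rw [localize_apply _ (htemp f hf), hφ, zero_add, mul_one]
  exact ⟨_, fun z => hz z ▸ norm_apply_le_of_fourier_decay (by simpa using h₀ z) (h₁ z) 0⟩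

end STFT

section ExpTemperateGrowth

variable {E : Type*} [NormedAddCommGroup E] {c : ℝ}

lemma one_add_norm_pow_mul_exp_neg_le (hc : 0 < c) (N : ℕ) (x : E) :
    (1 + ‖x‖) ^ N * Real.exp (-(c * ‖x‖ ^ 2)) ≤ N.factorial * Real.exp (1 + (4 * c)⁻¹) := by
  have hpow := Real.pow_div_factorial_le_exp (1 + ‖x‖) (by positivity) N
  rw [div_le_iff₀' (by positivity)] at hpow
  have hsq : ‖x‖ - c * ‖x‖ ^ 2 ≤ (4 * c)⁻¹ := by
    rw [← sub_nonneg, show (4 * c)⁻¹ - (‖x‖ - c * ‖x‖ ^ 2) = c * (‖x‖ - (2 * c)⁻¹) ^ 2 by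
      field_simp; ring]
    positivity
  calc (1 + ‖x‖) ^ N * Real.exp (-(c * ‖x‖ ^ 2))
      ≤ N.factorial * Real.exp (1 + ‖x‖) * Real.exp (-(c * ‖x‖ ^ 2)) := by gcongr
    _ = N.factorial * Real.exp (1 + (‖x‖ - c * ‖x‖ ^ 2)) := by
        rw [mul_assoc, ← Real.exp_add]; ring_nf
    _ ≤ _ := by gcongr

variable [NormedSpace ℝ E]

lemma exists_norm_iteratedFDeriv_exp_le {q : E → ℝ} (hq : q.HasTemperateGrowth) (m : ℕ) :
    ∃ (l : ℕ) (C : ℝ), 0 ≤ C ∧ ∀ x,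
      ‖iteratedFDeriv ℝ m (fun x => Real.exp (q x)) x‖ ≤ C * (1 + ‖x‖) ^ l * Real.exp (q x) := by
  obtain ⟨l, C, hC, h⟩ := hq.norm_iteratedFDeriv_le_uniform m
  refine ⟨l * m, m.factorial * (C + 1) ^ m, by positivity, fun x => ?_⟩
  have h1 : 1 ≤ (C + 1) * (1 + ‖x‖) ^ l :=
    one_le_mul_of_one_le_of_one_le (by linarith) (one_le_pow₀ (by linarith [norm_nonneg x]))
  have hcomp := norm_iteratedFDeriv_comp_le (n := m) (N := ∞) (D := (C + 1) * (1 + ‖x‖) ^ l)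
    (C := Real.exp (q x)) Real.contDiff_exp hq.1 (mod_cast le_top) x
    (fun i _ => by
      rw [norm_iteratedFDeriv_eq_norm_iteratedDeriv, iteratedDeriv_eq_iterate, Real.iter_deriv_exp,
        Real.norm_eq_abs, Real.abs_exp])
    (fun i hi him => by
      calc _ ≤ C * (1 + ‖x‖) ^ l := h i him x
        _ ≤ (C + 1) * (1 + ‖x‖) ^ l := by gcongr; linarith
        _ ≤ _ := le_self_pow₀ h1 (by omega))
  refine hcomp.trans_eq ?_
  rw [mul_pow, ← pow_mul]
  ring

end ExpTemperateGrowth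

section Gaussian

variable (E : Type*) [NormedAddCommGroup E] [InnerProductSpace ℝ E] {c : ℝ}

/-- The Gaussian `x ↦ exp (-c * ‖x‖ ^ 2)` as a complex-valued Schwartz function. -/
def gaussianSchwartz (hc : 0 < c) : 𝓢(E, ℂ) :=
  SchwartzMap.postcompCLM (𝕜 := ℝ) Complex.ofRealCLM
    { toFun x := Real.exp (-(c * ‖x‖ ^ 2))
      smooth' := Real.contDiff_exp.comp (contDiff_const.mul (contDiff_norm_sq ℝ)).neg
      decay' k m := by
        have hq : (fun x : E => -(c * ‖x‖ ^ 2)).HasTemperateGrowth :=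
          ((HasTemperateGrowth.const c).mul (hasTemperateGrowth_norm_sq E)).neg
        obtain ⟨l, C, hC, h⟩ := exists_norm_iteratedFDeriv_exp_le hq m
        refine ⟨C * ((k + l).factorial * Real.exp (1 + (4 * c)⁻¹)), fun x => ?_⟩
        calc _ ≤ (1 + ‖x‖) ^ k * (C * (1 + ‖x‖) ^ l * Real.exp (-(c * ‖x‖ ^ 2))) := by
              gcongr
              · linarith
              · exact h x
          _ = C * ((1 + ‖x‖) ^ (k + l) * Real.exp (-(c * ‖x‖ ^ 2))) := by ring
          _ ≤ _ := mul_le_mul_of_nonneg_left (one_add_norm_pow_mul_exp_neg_le hc _ x) hC }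

variable {E}

lemma gaussianSchwartz_apply (hc : 0 < c) (x : E) :
    gaussianSchwartz E hc x = (Real.exp (-(c * ‖x‖ ^ 2)) : ℝ) := rfl

lemma gaussianSchwartz_ne_zero (hc : 0 < c) (x : E) : gaussianSchwartz E hc x ≠ 0 :=
  Complex.ofReal_ne_zero.2 (Real.exp_ne_zero _)

end Gaussian

section Wigner

variable {n : ℕ}

lemma dotn_eq_dotProduct (p q : Fin n → ℝ) : dotn p q = p ⬝ᵥ q := rfl

lemma hasTemperateGrowth_cexp_I_mul : (fun t : ℝ => cexp (I * t)).HasTemperateGrowth := by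
  have hderiv (k : ℕ) : iteratedDeriv k (fun t : ℝ => cexp (I * t)) =
      fun t : ℝ => I ^ k * cexp (I * t) := by
    induction k with
    | zero => simp
    | succ k ih =>
      ext t
      have h : HasDerivAt (fun t : ℝ => I * (t : ℂ)) (I * 1) t :=
        (Complex.ofRealCLM.hasDerivAt (x := t)).const_mul I
      rw [iteratedDeriv_succ, ih, (h.cexp.const_mul (I ^ k)).deriv]
      ring
  refine ⟨(contDiff_const.mul Complex.ofRealCLM.contDiff).cexp, fun k => ⟨0, 1, fun t => ?_⟩⟩
  rw [norm_iteratedFDeriv_eq_norm_iteratedDeriv, hderiv]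
  simp [Complex.norm_exp_I_mul_ofReal]

/-- The phase-space shift of `u` by `p = (s, r)`: translation by `s` followed by modulation with
frequency `r`, without the symmetrizing phase of the Weyl operators. -/
def phaseShift (p : (Fin n → ℝ) × (Fin n → ℝ)) (u : 𝓢(Fin n → ℝ, ℂ)) : 𝓢(Fin n → ℝ, ℂ) :=
  SchwartzMap.smulLeftCLM ℂ (fun x => cexp (I * (p.2 ⬝ᵥ x : ℝ)))
    (SchwartzMap.compSubConstCLM ℝ p.1 u)

lemma phaseShift_apply (p : (Fin n → ℝ) × (Fin n → ℝ)) (u : 𝓢(Fin n → ℝ, ℂ)) (x : Fin n → ℝ) :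
    phaseShift p u x = cexp (I * (p.2 ⬝ᵥ x : ℝ)) * u (x - p.1) := by
  have hdot : (fun x : Fin n → ℝ => p.2 ⬝ᵥ x).HasTemperateGrowth :=
    (dotProductBilin ℝ ℝ p.2).toContinuousLinearMap.hasTemperateGrowth
  exact SchwartzMap.smulLeftCLM_apply_apply (hasTemperateGrowth_cexp_I_mul.comp hdot) _ x

lemma integral_norm_sq_phaseShift (p : (Fin n → ℝ) × (Fin n → ℝ)) (u : 𝓢(Fin n → ℝ, ℂ)) :
    ∫ x, ‖phaseShift p u x‖ ^ 2 = ∫ x, ‖u x‖ ^ 2 := by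
  simp_rw [phaseShift_apply, norm_mul, Complex.norm_exp_I_mul_ofReal, one_mul]
  exact integral_sub_right_eq_self (fun x => ‖u x‖ ^ 2) p.1

/-- The mean of the two shifts translates the Wigner transform, while their difference, rotated by
the symplectic form, modulates it. -/
lemma wigner_phaseShift (u v : 𝓢(Fin n → ℝ, ℂ)) (Z ζ Y : (Fin n → ℝ) × (Fin n → ℝ)) :
    wigner (phaseShift (Z - (2⁻¹ : ℝ) • (ζ.2, -ζ.1)) u)
        (phaseShift (Z + (2⁻¹ : ℝ) • (ζ.2, -ζ.1)) v) (Y + Z) =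
      cexp (I * (ζ.1 ⬝ᵥ Z.1 : ℝ)) * cexp (I * (ζ.1 ⬝ᵥ Y.1 + ζ.2 ⬝ᵥ Y.2 : ℝ)) * wigner u v Y := by
  rw [wigner, wigner, mul_left_comm]
  congr 1
  rw [← integral_const_mul]
  refine Eq.trans (integral_congr_ae (.of_forall fun y => ?_)) (integral_add_right_eq_self _ ζ.2)
  have hu : (Y + Z).1 + (2⁻¹ : ℝ) • y - (Z.1 - (2⁻¹ : ℝ) • ζ.2) = Y.1 + (2⁻¹ : ℝ) • (y + ζ.2) := by
    rw [Prod.fst_add, smul_add]; abel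
  have hv : (Y + Z).1 - (2⁻¹ : ℝ) • y - (Z.1 + (2⁻¹ : ℝ) • ζ.2) = Y.1 - (2⁻¹ : ℝ) • (y + ζ.2) := by
    rw [Prod.fst_add, smul_add]; abel
  have hconj (t : ℝ) : (starRingEnd ℂ) (cexp (I * t)) = cexp (-I * t) := by
    simp [← Complex.exp_conj]
  have hphase : cexp (I * ((Z.2 + (2⁻¹ : ℝ) • ζ.1) ⬝ᵥ ((Y + Z).1 + (2⁻¹ : ℝ) • y) : ℝ)) *
      cexp (-I * ((Z.2 - (2⁻¹ : ℝ) • ζ.1) ⬝ᵥ ((Y + Z).1 - (2⁻¹ : ℝ) • y) : ℝ)) *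
        cexp (-I * (y ⬝ᵥ (Y + Z).2 : ℝ)) =
      cexp (I * (ζ.1 ⬝ᵥ Z.1 : ℝ)) * cexp (I * (ζ.1 ⬝ᵥ Y.1 + ζ.2 ⬝ᵥ Y.2 : ℝ)) *
        cexp (-I * ((y + ζ.2) ⬝ᵥ Y.2 : ℝ)) := by
    simp only [← Complex.exp_add, Prod.fst_add, Prod.snd_add, add_dotProduct, dotProduct_add,
      sub_dotProduct, dotProduct_sub, smul_dotProduct, dotProduct_smul, smul_eq_mul,
      dotProduct_comm y Z.2]
    congr 1
    push_cast
    ring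
  simp only [phaseShift_apply, dotn_eq_dotProduct, map_mul, Prod.smul_mk, Prod.fst_sub,
    Prod.snd_sub, Prod.fst_add (p := Z), Prod.snd_add (p := Z), smul_neg, sub_neg_eq_add,
    ← sub_eq_add_neg, hu, hv, hconj]
  linear_combination (u (Y.1 + (2⁻¹ : ℝ) • (y + ζ.2)) *
    (starRingEnd ℂ) (v (Y.1 - (2⁻¹ : ℝ) • (y + ζ.2)))) * hphase

/-- The Gaussian `x ↦ exp (-(x ⬝ᵥ x) / 2)`, whose Wigner transform is again a Gaussian. -/
def standardGaussian (n : ℕ) : 𝓢(Fin n → ℝ, ℂ) :=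
  SchwartzMap.compCLMOfContinuousLinearEquiv ℂ (EuclideanSpace.equiv (Fin n) ℝ).symm
    (gaussianSchwartz (EuclideanSpace ℝ (Fin n)) one_half_pos)

lemma standardGaussian_apply (x : Fin n → ℝ) :
    standardGaussian n x = (Real.exp (-(x ⬝ᵥ x) / 2) : ℝ) := by
  have hx : ‖(EuclideanSpace.equiv (Fin n) ℝ).symm x‖ ^ 2 = x ⬝ᵥ x := by
    rw [EuclideanSpace.real_norm_sq_eq]
    simp [dotProduct, sq]
  rw [standardGaussian, SchwartzMap.compCLMOfContinuousLinearEquiv_apply, comp_apply,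
    gaussianSchwartz_apply, hx]
  ring_nf

lemma standardGaussian_add_mul_conj_sub (x y : Fin n → ℝ) :
    standardGaussian n (x + (2⁻¹ : ℝ) • y) *
        (starRingEnd ℂ) (standardGaussian n (x - (2⁻¹ : ℝ) • y)) =
      (Real.exp (-(x ⬝ᵥ x)) * Real.exp (-4⁻¹ * (y ⬝ᵥ y)) : ℝ) := by
  rw [standardGaussian_apply, standardGaussian_apply, Complex.conj_ofReal, ← Complex.ofReal_mul,
    ← Real.exp_add, ← Real.exp_add]
  simp only [add_dotProduct, dotProduct_add, sub_dotProduct, dotProduct_sub, smul_dotProduct,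
    dotProduct_smul, smul_eq_mul, dotProduct_comm y x]
  ring_nf

lemma pi_div_inv_four_cpow_natCast_half (n : ℕ) :
    (π / 4⁻¹ : ℂ) ^ (n / 2 : ℂ) = ((2 * √π) ^ n : ℝ) := by
  have hbase : (π / 4⁻¹ : ℂ) = ((2 * √π) ^ (2 : ℝ) : ℝ) := by
    rw [Real.rpow_two, mul_pow, Real.sq_sqrt Real.pi_pos.le]
    push_cast
    ring
  have hexp : (n / 2 : ℂ) = (n / 2 : ℝ) := by push_cast; rfl
  rw [hbase, hexp, ← Complex.ofReal_cpow (by positivity),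
    ← Real.rpow_mul (by positivity), mul_div_cancel₀ _ two_ne_zero, Real.rpow_natCast]

lemma wigner_standardGaussian (z : (Fin n → ℝ) × (Fin n → ℝ)) :
    wigner (standardGaussian n) (standardGaussian n) z =
      ((√π ^ n)⁻¹ * Real.exp (-(z.1 ⬝ᵥ z.1 + z.2 ⬝ᵥ z.2)) : ℝ) := by
  have hintegrand (y : Fin n → ℝ) : standardGaussian n (z.1 + (2⁻¹ : ℝ) • y) *
      (starRingEnd ℂ) (standardGaussian n (z.1 - (2⁻¹ : ℝ) • y)) *
        cexp (-I * (dotn y z.2 : ℝ)) = (Real.exp (-(z.1 ⬝ᵥ z.1)) : ℝ) *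
        cexp (-4⁻¹ * ∑ i, (y i : ℂ) ^ 2 + ∑ i, -I * (z.2 i : ℂ) * y i) := by
    have hsq : ∑ i, (y i : ℂ) ^ 2 = (y ⬝ᵥ y : ℝ) := by simp [dotProduct, sq]
    have hlin : ∑ i, -I * (z.2 i : ℂ) * y i = -I * (y ⬝ᵥ z.2 : ℝ) := by
      simp only [dotProduct, Complex.ofReal_sum, Complex.ofReal_mul, Finset.mul_sum]
      exact Finset.sum_congr rfl fun i _ => by ring
    rw [standardGaussian_add_mul_conj_sub, hsq, hlin, dotn_eq_dotProduct, Complex.exp_add]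
    push_cast
    ring
  have hfreq : (∑ i, (-I * (z.2 i : ℂ)) ^ 2) / (4 * 4⁻¹) = (-(z.2 ⬝ᵥ z.2) : ℝ) := by
    simp only [mul_pow, neg_sq, Complex.I_sq, ← Finset.mul_sum]
    simp [dotProduct, sq]
  have hconst : ((2 * π) ^ n)⁻¹ * (2 * √π) ^ n = (√π ^ n)⁻¹ := by
    rw [← inv_pow, ← mul_pow, ← inv_pow]
    congr 1
    have hsqrt : √π ≠ 0 := (Real.sqrt_pos.2 Real.pi_pos).ne'
    field_simp
    exact Real.sq_sqrt Real.pi_pos.le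
  rw [wigner, funext hintegrand, integral_const_mul,
    GaussianFourier.integral_cexp_neg_mul_sum_add (by norm_num), Fintype.card_fin, hfreq,
    pi_div_inv_four_cpow_natCast_half, neg_add, Real.exp_add, ← hconst, ← Complex.ofReal_exp]
  push_cast
  ring

end Wigner

section PhaseSpace

variable {n : ℕ}

/-- `ℝⁿ × ℝⁿ` with its Euclidean rather than its supremum norm, as needed by Mathlib's Fourier
transform. The index type is that of `stdVec`. -/
def phaseEquiv (n : ℕ) : EuclideanSpace ℝ (Fin n ⊕ Fin n) ≃L[ℝ] (Fin n → ℝ) × (Fin n → ℝ) :=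
  (EuclideanSpace.equiv (Fin n ⊕ Fin n) ℝ).trans
    (ContinuousLinearEquiv.sumPiEquivProdPi ℝ (Fin n) (Fin n) fun _ => ℝ)

lemma phaseEquiv_apply (x : EuclideanSpace ℝ (Fin n ⊕ Fin n)) :
    phaseEquiv n x = (fun i => x (.inl i), fun i => x (.inr i)) := rfl

lemma integral_comp_phaseEquiv (F : (Fin n → ℝ) × (Fin n → ℝ) → ℂ) :
    ∫ x, F (phaseEquiv n x) = ∫ z, F z :=
  ((volume_measurePreserving_sumPiEquivProdPi fun _ : Fin n ⊕ Fin n => ℝ).comp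
    (PiLp.volume_preserving_ofLp (Fin n ⊕ Fin n))).integral_comp
      (phaseEquiv n).toHomeomorph.measurableEmbedding F

lemma real_inner_eq_phaseEquiv (x y : EuclideanSpace ℝ (Fin n ⊕ Fin n)) :
    ⟪x, y⟫ = (phaseEquiv n x).1 ⬝ᵥ (phaseEquiv n y).1 +
      (phaseEquiv n x).2 ⬝ᵥ (phaseEquiv n y).2 := by
  simp only [PiLp.inner_apply, Fintype.sum_sum_type, RCLike.inner_apply, conj_trivial, mul_comm,
    phaseEquiv_apply, dotProduct]

lemma phaseEquiv_basisFun (i : Fin n ⊕ Fin n) :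
    phaseEquiv n (EuclideanSpace.basisFun _ ℝ i) = stdVec i := by
  rcases i with i | i <;> ext j <;> simp [phaseEquiv_apply, stdVec, Pi.single_apply]

lemma norm_phaseEquiv_le (x : EuclideanSpace ℝ (Fin n ⊕ Fin n)) : ‖phaseEquiv n x‖ ≤ ‖x‖ :=
  max_le ((pi_norm_le_iff_of_nonneg (norm_nonneg x)).2 fun i => PiLp.norm_apply_le x (.inl i))
    ((pi_norm_le_iff_of_nonneg (norm_nonneg x)).2 fun i => PiLp.norm_apply_le x (.inr i))

lemma fderiv_comp_phaseEquiv_basisFun (f : (Fin n → ℝ) × (Fin n → ℝ) → ℂ) (i : Fin n ⊕ Fin n) :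
    (fun x => fderiv ℝ (f ∘ phaseEquiv n) x (EuclideanSpace.basisFun _ ℝ i)) =
      pDeriv i f ∘ phaseEquiv n := by
  ext x
  rw [(phaseEquiv n).comp_right_fderiv]
  simp [pDeriv, ← phaseEquiv_basisFun]

lemma gaussianSchwartz_one_eq_wigner (x : EuclideanSpace ℝ (Fin n ⊕ Fin n)) :
    gaussianSchwartz (EuclideanSpace ℝ (Fin n ⊕ Fin n)) one_pos x =
      (√π ^ n : ℝ) * wigner (standardGaussian n) (standardGaussian n) (phaseEquiv n x) := by
  have hpi : √π ^ n ≠ 0 := (pow_pos (Real.sqrt_pos.2 Real.pi_pos) n).ne'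
  rw [wigner_standardGaussian, ← real_inner_eq_phaseEquiv, real_inner_self_eq_norm_sq,
    gaussianSchwartz_apply, one_mul, ← Complex.ofReal_mul, mul_inv_cancel_left₀ hpi]

lemma norm_fourier_localize_gaussianSchwartz {b : (Fin n → ℝ) × (Fin n → ℝ) → ℂ}
    (hb : (b ∘ phaseEquiv n).HasTemperateGrowth) (z w : EuclideanSpace ℝ (Fin n ⊕ Fin n)) :
    ∃ p q, ‖𝓕 (localize (gaussianSchwartz _ one_pos) (b ∘ phaseEquiv n) z) w‖ =
      √π ^ n * ‖∫ Y, b Y * wigner (phaseShift p (standardGaussian n))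
        (phaseShift q (standardGaussian n)) Y‖ := by
  set Z := phaseEquiv n z
  set ζ := phaseEquiv n (-(2 * π) • w)
  set p := Z - (2⁻¹ : ℝ) • (ζ.2, -ζ.1) with hp
  set q := Z + (2⁻¹ : ℝ) • (ζ.2, -ζ.1) with hq
  refine ⟨p, q, ?_⟩
  have hcov : cexp (I * (ζ.1 ⬝ᵥ Z.1 : ℝ)) *
      𝓕 (localize (gaussianSchwartz _ one_pos) (b ∘ phaseEquiv n) z) w =
        (√π ^ n : ℝ) * ∫ Y, b Y * wigner (phaseShift p (standardGaussian n))
          (phaseShift q (standardGaussian n)) Y := by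
    rw [← integral_comp_phaseEquiv, ← integral_add_right_eq_self _ z, SchwartzMap.fourier_coe,
      Real.fourier_eq', ← integral_const_mul, ← integral_const_mul]
    refine integral_congr_ae (.of_forall fun x => ?_)
    have hphase : ⟪-(2 * π) • w, x⟫ = -2 * π * ⟪x, w⟫ := by
      rw [real_inner_smul_left, real_inner_comm]; ring
    simp only [map_add, hp, hq]
    rw [wigner_phaseShift, ← real_inner_eq_phaseEquiv, hphase, localize_apply _ hb,
      gaussianSchwartz_one_eq_wigner, comp_apply, map_add, smul_eq_mul, mul_comm I]
    ring_nf
  have hnorm := congrArg norm hcov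
  rwa [norm_mul, norm_mul, Complex.norm_exp_I_mul_ofReal, one_mul, Complex.norm_of_nonneg
    (by positivity)] at hnorm

lemma hasBoundedSTFT_of_norm_integral_mul_wigner_le {b : (Fin n → ℝ) × (Fin n → ℝ) → ℂ}
    (hb : (b ∘ phaseEquiv n).HasTemperateGrowth) {C : ℝ}
    (hC : ∀ u v : 𝓢(Fin n → ℝ, ℂ), ‖∫ z, b z * wigner u v z‖ ≤
      C * √(∫ x, ‖u x‖ ^ 2) * √(∫ x, ‖v x‖ ^ 2)) :
    HasBoundedSTFT (gaussianSchwartz _ one_pos) (b ∘ phaseEquiv n) := by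
  refine ⟨√π ^ n * (C * √(∫ x, ‖standardGaussian n x‖ ^ 2) *
    √(∫ x, ‖standardGaussian n x‖ ^ 2)), fun z w => ?_⟩
  obtain ⟨p, q, h⟩ := norm_fourier_localize_gaussianSchwartz hb z w
  rw [h]
  gcongr
  simpa only [integral_norm_sq_phaseShift] using
    hC (phaseShift p (standardGaussian n)) (phaseShift q (standardGaussian n))

lemma contDiff_pDerivList {a : (Fin n → ℝ) × (Fin n → ℝ) → ℂ} (ha : ContDiff ℝ ∞ a)
    (L : List (Fin n ⊕ Fin n)) : ContDiff ℝ ∞ (pDerivList L a) := by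
  induction L with
  | nil => exact ha
  | cons i L ih => exact (ih.fderiv_right le_rfl).clm_apply contDiff_const

end PhaseSpace

/-- Beals-type converse: if `a : ℝ^{2n} → ℂ` is smooth with polynomially bounded
partial derivatives, and for every multi-index `α` the Weyl operator
`Op(∂^α a)` is bounded on `L²(ℝⁿ)` (i.e. `|∫ (∂^α a) · W(u,v)| ≤ C_α ‖u‖ ‖v‖`),
then every partial derivative `∂^α a` is bounded on `ℝ^{2n}`. -/
theorem beals_converse (n : ℕ) (hn : 1 ≤ n)
    (a : (Fin n → ℝ) × (Fin n → ℝ) → ℂ) (ha : ContDiff ℝ (⊤ : ℕ∞) a)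
    (hpoly : ∀ L : List (Fin n ⊕ Fin n), ∃ (C : ℝ) (m : ℕ),
      ∀ z, ‖pDerivList L a z‖ ≤ C * (1 + ‖z‖) ^ m)
    (hOp : ∀ L : List (Fin n ⊕ Fin n), ∃ C > (0 : ℝ),
      ∀ u v : SchwartzMap (Fin n → ℝ) ℂ,
        ‖∫ z : (Fin n → ℝ) × (Fin n → ℝ), pDerivList L a z * wigner u v z‖ ≤
          C * Real.sqrt (∫ x : Fin n → ℝ, ‖u x‖ ^ 2) *
            Real.sqrt (∫ x : Fin n → ℝ, ‖v x‖ ^ 2)) :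
    ∀ L : List (Fin n ⊕ Fin n), ∃ M : ℝ, ∀ z, ‖pDerivList L a z‖ ≤ M := by
  let f (L : List (Fin n ⊕ Fin n)) := pDerivList L a ∘ phaseEquiv n
  have hpartial (L) (i : Fin n ⊕ Fin n) :
      (fun x => fderiv ℝ (f L) x (EuclideanSpace.basisFun _ ℝ i)) ∈ Set.range f :=
    ⟨i :: L, (fderiv_comp_phaseEquiv_basisFun (pDerivList L a) i).symm⟩
  have hbound (L) : ∃ (k : ℕ) (C : ℝ), ∀ x, ‖f L x‖ ≤ C * (1 + ‖x‖) ^ k := by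
    obtain ⟨C, k, hC⟩ := hpoly L
    refine ⟨k, |C|, fun x => (hC _).trans ?_⟩
    gcongr
    · exact le_abs_self C
    · exact norm_phaseEquiv_le x
  have htemp (L) : (f L).HasTemperateGrowth :=
    hasTemperateGrowth_of_forall_partial (EuclideanSpace.basisFun _ ℝ)
      (Set.forall_mem_range.2 fun L => (contDiff_pDerivList ha L).comp (phaseEquiv n).contDiff)
      (Set.forall_mem_range.2 hpartial) (Set.forall_mem_range.2 hbound) (f L) ⟨L, rfl⟩
  have hSTFT (L) : HasBoundedSTFT (gaussianSchwartz _ one_pos) (f L) :=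
    have ⟨_, _, hC⟩ := hOp L
    hasBoundedSTFT_of_norm_integral_mul_wigner_le (htemp L) hC
  intro L
  obtain ⟨M, hM⟩ := exists_norm_le_of_hasBoundedSTFT (EuclideanSpace.basisFun _ ℝ)
    (Set.forall_mem_range.2 htemp) (Set.forall_mem_range.2 hpartial)
    (gaussianSchwartz_ne_zero one_pos) (Set.forall_mem_range.2 hSTFT) (f L) ⟨L, rfl⟩
  exact ⟨M, fun z => by simpa [f] using hM ((phaseEquiv n).symm z)⟩
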